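/- arXiv:2503.04547 — 2 statements merged into one kernel-verified Lean document; each statement's English description precedes it below -/
import Mathlib

section
/- Let m := p−b−1 ≥ 1 and suppose ℓ = b+m+1 (= p). Then the trace of the linear endomorphism f ↦ ρ(g·f) of W equals (1/π_ℓ)·{ Σ_{k=0}^{m} ((b+1)_{m−k}/(m−k)!) · e_{ℓ−k}(n_1−1,…,n_ℓ−1) + (−1)^b }. -/
open Finset MvPolynomial

noncomputable section

/-- Value of the elementary symmetric polynomial `e_k` at the family `v` restricted to `A`. -/
def esymVal {α F : Type*} [DecidableEq α] [CommRing F] (A : Finset α) (k : ℕ) (v : α → F) : F :=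
  ∑ B ∈ A.powersetCard k, ∏ i ∈ B, v i

/-- Pochhammer symbol `(a)_k = a (a+1) ⋯ (a+k-1)`. -/
def poch (a : ℚ) (k : ℕ) : ℚ := ∏ i ∈ Finset.range k, (a + (i : ℚ))

variable {p : ℕ}

/-- The index in `Fin (∑ t, n t)` of the `i`-th element of the `j`-th consecutive block. -/
def emb (n : Fin p → ℕ) (j : Fin p) (i : Fin (n j)) : Fin (∑ t, n t) :=
  ⟨(∑ t ∈ Finset.univ.filter (fun t => t < j), n t) + i, by
    have hj : j ∉ Finset.univ.filter (fun t => t < j) := by simp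
    have h2 : ∑ t ∈ insert j (Finset.univ.filter (fun t => t < j)), n t ≤ ∑ t, n t :=
      Finset.sum_le_sum_of_subset (Finset.subset_univ _)
    rw [Finset.sum_insert hj] at h2
    have := i.isLt
    omega⟩

/-- The Young subgroup: permutations mapping each block onto itself. -/
def youngGroup (n : Fin p → ℕ) : Finset (Equiv.Perm (Fin (∑ t, n t))) :=
  Finset.univ.filter fun w => ∀ (j : Fin p) (i : Fin (n j)), ∃ i' : Fin (n j),
    w (emb n j i) = emb n j i'

/-- The action of a permutation of the variables on polynomials, as a linear map. -/
def permAct {σ : Type*} (w : Equiv.Perm σ) :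
    MvPolynomial σ ℚ →ₗ[ℚ] MvPolynomial σ ℚ :=
  (MvPolynomial.rename ⇑w).toLinearMap

/-- Averaging operator over the Young subgroup. -/
def rho (n : Fin p → ℕ) :
    MvPolynomial (Fin (∑ t, n t)) ℚ →ₗ[ℚ] MvPolynomial (Fin (∑ t, n t)) ℚ :=
  ((youngGroup n).card : ℚ)⁻¹ • ∑ h ∈ youngGroup n, permAct h

/-- The alternating (Vandermonde) polynomial in the variables `x_{t 0}, …, x_{t b}`. -/
def Delta {N b : ℕ} (t : Fin (b + 1) → Fin N) : MvPolynomial (Fin N) ℚ :=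
  ∏ q ∈ Finset.univ.filter (fun q : Fin (b + 1) × Fin (b + 1) => q.1 < q.2),
    (X (t q.1) - X (t q.2))

/-- The span of all `Δ(x_{i₁},…,x_{i_{b+1}})` with `i₁ < ⋯ < i_{b+1}`. -/
def hookSpan (N b : ℕ) : Submodule ℚ (MvPolynomial (Fin N) ℚ) :=
  Submodule.span ℚ {f | ∃ t : Fin (b + 1) → Fin N, StrictMono t ∧ f = Delta t}

/-- The first `ℓ` block labels. -/
def firstL (p ℓ : ℕ) : Finset (Fin p) := Finset.univ.filter fun i => (i : ℕ) < ℓ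

/-!
The space `W` is the isomorphic image of `Λᵇ` of the sum-zero vectors under
`v₁ ∧ ⋯ ∧ v_b ↦ det (∑ a, vᵢ(a) x_a ^ k)`, `1 ≤ i, k ≤ b`, since at differences `e_s - e_t` of
standard basis vectors with common `t` this determinant is a Vandermonde polynomial up to sign.
Hence, if a linear map on `W` is induced by a matrix `M` preserving coordinate sums, then its
trace is the `b`-th coefficient of `det (1 + X M) / (1 + X)`.

The determinant is alternating in the `vᵢ`, so averaging it over the Young group amounts to
replacing every `vᵢ` by the vector of its block means: `f ↦ ρ (g · f)` is induced by the single
matrix that applies `g` and then takes block means. This matrix factors through `ℚ ^ p`, and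
`det (1 + A B) = det (1 + B A)` replaces it by a `p × p` matrix which is diagonal plus cyclic.
With `u j = n j - 1` the resulting determinant is
`(∏ j, (1 + u j * (1 + X)) - (-X) ^ p) / ∏ j, n j`. Dividing by `1 + X` and expanding in
elementary symmetric functions of the `u j` gives the formula.
-/

/-- The polynomial `det (1 + X M)`, whose `k`-th coefficient is the trace of the `k`-th exterior
power of `M`. -/
def detOneAddX {R m : Type*} [CommRing R] [Fintype m] [DecidableEq m] (M : Matrix m m R) :
    Polynomial R :=
  (1 + (Polynomial.X : Polynomial R) • M.map Polynomial.C).det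

theorem detOneAddX_mul_comm {R m l : Type*} [CommRing R] [Fintype m] [DecidableEq m] [Fintype l]
    [DecidableEq l] (A : Matrix m l R) (B : Matrix l m R) :
    detOneAddX (A * B) = detOneAddX (B * A) := by
  rw [detOneAddX, detOneAddX, Matrix.map_mul, Matrix.map_mul, ← Matrix.smul_mul,
    Matrix.det_one_add_mul_comm, Matrix.mul_smul]

theorem trace_exteriorPower_map {R V ι : Type*} [CommRing R] [AddCommGroup V] [Module R V]
    [Fintype ι] [hdec : DecidableEq ι] (e : Module.Basis ι R V) (f : V →ₗ[R] V) (k : ℕ) :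
    LinearMap.trace R (⋀[R]^k V) (exteriorPower.map k f)
      = (detOneAddX (LinearMap.toMatrix e e f)).coeff k := by
  let order : LinearOrder ι := LinearOrder.lift' _ (Fintype.equivFin ι).injective
  obtain rfl : hdec = order.toDecidableEq := Subsingleton.elim _ _
  have key (S : Set.powersetCard ι k) :
      LinearMap.toMatrix (e.exteriorPower k) (e.exteriorPower k) (exteriorPower.map k f) S S
        = ((LinearMap.toMatrix e e f).submatrix ((↑) : S.1 → ι) (↑)).det := by
    rw [← Matrix.det_submatrix_equiv_self (S.1.orderIsoOfFin S.2).toEquiv, ← Matrix.det_transpose,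
      LinearMap.toMatrix_apply, exteriorPower.basis_repr_apply, exteriorPower.basis_apply,
      exteriorPower.ιMulti_family, exteriorPower.map_apply_ιMulti,
      exteriorPower.ιMultiDual_apply_ιMulti]
    congr 1
    ext i j
    simp [LinearMap.toMatrix_apply, Set.powersetCard.ofFinEmbEquiv_symm_apply]
    rfl
  rw [detOneAddX, Matrix.coeff_det_one_add_X_smul_eq_sum_minors,
    LinearMap.trace_eq_matrix_trace R (e.exteriorPower k), Matrix.trace]
  simp only [Matrix.diag_apply, key]
  symm
  apply Finset.sum_subtype
    (f := fun S : Finset ι => ((LinearMap.toMatrix e e f).submatrix ((↑) : S → ι) (↑)).det)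
  simp [Finset.mem_powersetCard, Set.powersetCard.mem_iff]

theorem trace_restrict_eq_trace_comp {K E F : Type*} [Field K] [AddCommGroup E] [Module K E]
    [FiniteDimensional K E] [AddCommGroup F] [Module K F] {P : E →ₗ[K] F} {I : F →ₗ[K] E}
    (hPIP : P ∘ₗ I ∘ₗ P = P) {W : Submodule K F} (hPW : LinearMap.range P = W) {Φ : F →ₗ[K] F}
    (hΦ : ∀ x ∈ W, Φ x ∈ W) :
    LinearMap.trace K W (Φ.restrict hΦ) = LinearMap.trace K E (I ∘ₗ Φ ∘ₗ P) := by
  subst hPW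
  have hsection : P.rangeRestrict ∘ₗ I ∘ₗ (LinearMap.range P).subtype = LinearMap.id := by
    ext ⟨_, x, rfl⟩
    exact LinearMap.congr_fun hPIP x
  calc LinearMap.trace K (LinearMap.range P) (Φ.restrict hΦ)
      = LinearMap.trace K (LinearMap.range P)
          ((Φ.restrict hΦ ∘ₗ P.rangeRestrict) ∘ₗ I ∘ₗ (LinearMap.range P).subtype) := by
        rw [LinearMap.comp_assoc, hsection, LinearMap.comp_id]
    _ = LinearMap.trace K E
          ((I ∘ₗ (LinearMap.range P).subtype) ∘ₗ Φ.restrict hΦ ∘ₗ P.rangeRestrict) :=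
        LinearMap.trace_comp_comm' _ _

theorem one_add_X_mul_detOneAddX_mul_one_sub_vecMulVec {R m : Type*} [CommRing R] [Fintype m]
    [DecidableEq m] {M : Matrix m m R} (hM : Matrix.vecMul 1 M = 1) {z : m → R} (hz : 1 ⬝ᵥ z = 1) :
    (1 + Polynomial.X) * detOneAddX (M * (1 - Matrix.vecMulVec z 1)) = detOneAddX M := by
  set u : Matrix m m R := Matrix.vecMulVec (M.mulVec z) 1 with hu
  have hsub : M * (1 - Matrix.vecMulVec z 1) = M - u := by
    rw [mul_sub, mul_one, Matrix.mul_vecMulVec]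
  have hannihilate : u * (M - u) = 0 := by
    rw [hu, mul_sub, Matrix.vecMulVec_mul, Matrix.vecMulVec_mul, hM, Matrix.vecMul_vecMulVec,
      Matrix.dotProduct_mulVec, hM, hz, one_smul, sub_self]
  have hdet : (1 + (Polynomial.X : Polynomial R) • u.map Polynomial.C).det = 1 + Polynomial.X := by
    have hu' : (Polynomial.X : Polynomial R) • u.map Polynomial.C
        = Matrix.vecMulVec (fun i => Polynomial.X * Polynomial.C (M.mulVec z i)) 1 := by
      ext1 i j
      simp [hu, Matrix.vecMulVec_apply]
    have hsum : ∑ i, M.mulVec z i = 1 := by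
      rw [← one_dotProduct, Matrix.dotProduct_mulVec, hM, hz]
    rw [hu', Matrix.vecMulVec_eq Unit, Matrix.det_one_add_replicateCol_mul_replicateRow,
      one_dotProduct, ← Finset.mul_sum, ← map_sum, hsum, map_one, mul_one]
  have hmap : u.map Polynomial.C * (M - u).map Polynomial.C = 0 := by
    rw [← Matrix.map_mul, hannihilate, Matrix.map_zero _ (map_zero _)]
  have hadd : u.map Polynomial.C + (M - u).map Polynomial.C = M.map Polynomial.C := by
    rw [← Matrix.map_add _ (map_add _), add_sub_cancel]
  rw [hsub, detOneAddX, ← hdet, ← Matrix.det_mul, detOneAddX, ← hadd]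
  congr 1
  rw [add_mul, one_mul, mul_add, mul_one, smul_mul_smul_comm, hmap, smul_zero, add_zero, smul_add]
  abel

theorem det_diagonal_add_cycle {R ι : Type*} [CommRing R] [Fintype ι] [DecidableEq ι]
    {σ : Equiv.Perm ι} (hσ : σ.IsCycle) (hsupp : σ.support = Finset.univ) (c d : ι → R) :
    (Matrix.of fun i j => (if i = j then d j else 0) + if i = σ j then c j else 0).det
      = ∏ j, d j + Equiv.Perm.sign σ * ∏ j, c j := by
  have hfix (j : ι) : σ j ≠ j := by
    rw [← Equiv.Perm.mem_support, hsupp]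
    exact Finset.mem_univ j
  have eq_one_or_eq {τ : Equiv.Perm ι} (hτ : ∀ j, τ j = j ∨ τ j = σ j) : τ = 1 ∨ τ = σ := by
    by_contra! h
    obtain ⟨i, hi⟩ : ∃ i, τ i ≠ i := by simpa [Equiv.ext_iff] using h.1
    refine h.2 (Equiv.ext fun j => ?_)
    obtain ⟨k, rfl⟩ := hσ.exists_pow_eq (hfix i) (hfix j)
    induction k with
    | zero => exact (hτ i).resolve_left hi
    | succ k ih =>
      rw [pow_succ', Equiv.Perm.mul_apply]
      refine (hτ _).resolve_left fun hk => hfix ((σ ^ k) i) ?_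
      exact τ.injective (hk.trans ih.symm)
  have hne : (1 : Equiv.Perm ι) ≠ σ := hσ.ne_one.symm
  rw [Matrix.det_apply', Finset.sum_eq_add (1 : Equiv.Perm ι) σ hne]
  · simp [hfix, fun i => (hfix i).symm]
  · rintro τ - ⟨h1, h2⟩
    obtain ⟨j, hj⟩ : ∃ j, ¬ (τ j = j ∨ τ j = σ j) := by
      by_contra! h
      exact (eq_one_or_eq h).elim h1 h2
    rw [Finset.prod_eq_zero (Finset.mem_univ j), mul_zero]
    simp_all
  · simp
  · simp

theorem sum_single_injective {α : Type*} {n : ℕ} {d : Fin n → ℕ} (hd : Function.Injective d)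
    (hd0 : ∀ k, d k ≠ 0) {s t : Fin n → α} (hs : Function.Injective s) (ht : Function.Injective t)
    (h : ∑ k, Finsupp.single (s k) (d k) = ∑ k, Finsupp.single (t k) (d k)) : s = t := by
  classical
  have apply_self {r : Fin n → α} (hr : Function.Injective r) (k : Fin n) :
      (∑ k, Finsupp.single (r k) (d k)) (r k) = d k := by
    simp [Finsupp.single_apply, hr.eq_iff]
  funext k
  have hk : ∑ j, Finsupp.single (t j) (d j) (s k) = d k := by
    rw [← Finsupp.finsetSum_apply, ← h, apply_self hs]
  obtain ⟨j, hj⟩ : ∃ j, t j = s k := by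
    by_contra! hne
    exact hd0 k (by simpa [Finsupp.single_apply, hne] using hk.symm)
  rw [← Finsupp.finsetSum_apply, ← hj, apply_self ht] at hk
  rw [← hj, hd hk]

theorem alternatingMap_mem_of_forall_basis_mem {R ι κ M N : Type*} [CommRing R] [Finite ι]
    [AddCommGroup M] [Module R M] [AddCommGroup N] [Module R N] (f : M [⋀^ι]→ₗ[R] N)
    (e : Module.Basis κ R M) {S : Submodule R N}
    (h : ∀ u : ι → κ, Function.Injective u → f (fun i => e (u i)) ∈ S) (v : ι → M) : f v ∈ S := by
  have hzero : S.mkQ.compAlternatingMap f = 0 :=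
    e.ext_alternating fun u hu => (Submodule.Quotient.mk_eq_zero S).mpr (h u hu)
  exact (Submodule.Quotient.mk_eq_zero S).mp (DFunLike.congr_fun hzero v)

section Alternant

variable {α R : Type*} [Fintype α] [CommRing R] {n : ℕ}

/-- The generalized Vandermonde determinant with exponents `d`, extended multilinearly from tuples
of variables to tuples of linear combinations of variables: on standard basis vectors
`e_{t 0}, …, e_{t (n - 1)}` it is `det (x_{t i} ^ d k)`. -/
def alternant (d : Fin n → ℕ) : (α → R) [⋀^Fin n]→ₗ[R] MvPolynomial α R where
  toMultilinearMap :=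
    (Matrix.detRowAlternating.toMultilinearMap.restrictScalars R).compLinearMap fun _ =>
      LinearMap.pi fun k => Fintype.linearCombination R fun a => X a ^ d k
  map_eq_zero_of_eq' v _ _ hv hij :=
    Matrix.detRowAlternating.map_eq_zero_of_eq
      (fun i => LinearMap.pi (fun k => Fintype.linearCombination R fun a => X a ^ d k) (v i))
      (by simp [hv]) hij

theorem alternant_apply (d : Fin n → ℕ) (v : Fin n → α → R) :
    alternant d v
      = (Matrix.of fun i k => ∑ a, v i a • (X a : MvPolynomial α R) ^ d k).det :=
  rfl

theorem alternant_single [DecidableEq α] (d : Fin n → ℕ) (t : Fin n → α) :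
    alternant d (fun i => Pi.single (t i) (1 : R))
      = (Matrix.of fun i k => (X (t i) : MvPolynomial α R) ^ d k).det := by
  rw [alternant_apply]
  congr 2
  ext1 i
  ext1 k
  simp [Pi.single_apply]

theorem rename_alternant (w : Equiv.Perm α) (d : Fin n → ℕ) (v : Fin n → α → R) :
    rename w (alternant d v) = alternant d fun i => v i ∘ w.symm := by
  rw [alternant_apply, alternant_apply, AlgHom.map_det]
  congr 1
  ext1 i k
  simp only [AlgHom.mapMatrix_apply, Matrix.map_apply, Matrix.of_apply, map_sum, map_smul, map_pow,
    rename_X, Function.comp_apply]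
  exact Fintype.sum_equiv w _ _ fun a => by rw [w.symm_apply_apply]

theorem alternant_cons {z : α → R} (hz : 1 ⬝ᵥ z = 1) (v : Fin n → α → R) :
    alternant (Fin.val : Fin (n + 1) → ℕ) (Fin.cons z v)
      = alternant (fun k : Fin n => (k : ℕ) + 1) fun i => v i - (1 ⬝ᵥ v i) • z := by
  let u : Fin (n + 1) → α → R := Fin.cons z fun i => v i - (1 ⬝ᵥ v i) • z
  have hsum (y : α → R) : ∑ a, y a • (1 : MvPolynomial α R) = C (1 ⬝ᵥ y) := by
    simp [MvPolynomial.smul_eq_C_mul, one_dotProduct]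
  have hcol (i : Fin n) : 1 ⬝ᵥ u i.succ = 0 := by simp [u, dotProduct_sub, dotProduct_smul, hz]
  -- Subtracting multiples of the first row from the others clears the column of zeroth powers.
  calc alternant (Fin.val : Fin (n + 1) → ℕ) (Fin.cons z v)
      = alternant (Fin.val : Fin (n + 1) → ℕ) u := by
        refine Matrix.det_eq_of_forall_row_eq_smul_add_const
          (Fin.cons 0 fun i => C (1 ⬝ᵥ v i)) 0 rfl fun i k => ?_
        induction i using Fin.cases with
        | zero => simp [u]
        | succ i =>
          simp [u, MvPolynomial.smul_eq_C_mul]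
    _ = alternant (fun k : Fin n => (k : ℕ) + 1) fun i => v i - (1 ⬝ᵥ v i) • z := by
        rw [alternant_apply, Matrix.det_succ_column_zero, Fin.sum_univ_succ]
        have hu0 : 1 ⬝ᵥ u 0 = 1 := hz
        simp only [Matrix.of_apply, Fin.val_zero, pow_zero, hsum, hcol, hu0, map_zero, map_one,
          mul_zero, zero_mul, Finset.sum_const_zero, add_zero, one_mul, Fin.succAbove_zero]
        rfl

theorem coeff_alternant {d : Fin n → ℕ} (hd : Function.Injective d) (hd0 : ∀ k, d k ≠ 0)
    {s : Fin n → α} (hs : Function.Injective s) (v : Fin n → α → R) :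
    (alternant d v).coeff (∑ k, Finsupp.single (s k) (d k))
      = (Matrix.of fun i k => v i (s k)).det := by
  classical
  suffices (lcoeff R (∑ k, Finsupp.single (s k) (d k))).compAlternatingMap (alternant d)
      = Matrix.detRowAlternating.compLinearMap (LinearMap.funLeft R R s) from
    DFunLike.congr_fun this v
  refine (Pi.basisFun R α).ext_alternating fun u hu => ?_
  have hmonomial (σ : Equiv.Perm (Fin n)) : ∏ k, (X (u (σ k)) : MvPolynomial α R) ^ d k
      = monomial (∑ k, Finsupp.single (u (σ k)) (d k)) 1 := by
    simp [MvPolynomial.monomial_sum_one, MvPolynomial.X_pow_eq_monomial]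
  have hexponent (σ : Equiv.Perm (Fin n)) :
      ∑ k, Finsupp.single (u (σ k)) (d k) = ∑ k, Finsupp.single (s k) (d k)
        ↔ ∀ k, s k = u (σ k) := by
    refine ⟨fun h k => ?_, fun h => by simp only [h]⟩
    exact (congr_fun (sum_single_injective hd hd0 (hu.comp σ.injective) hs h) k).symm
  rw [LinearMap.compAlternatingMap_apply, AlternatingMap.compLinearMap_apply, lcoeff_apply]
  simp only [Pi.basisFun_apply]
  change _ = (Matrix.of fun i k => (Pi.single (u i) 1 : α → R) (s k)).det
  rw [alternant_single, Matrix.det_apply, Matrix.det_apply, MvPolynomial.coeff_sum]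
  refine Finset.sum_congr rfl fun σ _ => ?_
  simp only [Matrix.of_apply, hmonomial, Units.smul_def, coeff_smul, coeff_monomial, hexponent,
    Pi.single_apply, Finset.prod_ite_zero]
  simp

theorem exists_comp_alternatingMapLinearEquiv_alternant_eq_id {d : Fin n → ℕ}
    (hd : Function.Injective d) (hd0 : ∀ k, d k ≠ 0) :
    ∃ I : MvPolynomial α R →ₗ[R] ⋀[R]^n (α → R),
      I ∘ₗ exteriorPower.alternatingMapLinearEquiv (alternant d) = LinearMap.id := by
  let : LinearOrder α := LinearOrder.lift' _ (Fintype.equivFin α).injective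
  let e := (Pi.basisFun R α).exteriorPower n
  let s (S : Set.powersetCard α n) : Fin n ↪o α := Set.powersetCard.ofFinEmbEquiv.symm S
  refine ⟨∑ S, (lcoeff R (∑ k, Finsupp.single (s S k) (d k))).smulRight (e S), ?_⟩
  refine exteriorPower.linearMap_ext (AlternatingMap.ext fun v => ?_)
  have hcoord (S : Set.powersetCard α n) : e.repr (exteriorPower.ιMulti R n v) S
      = (alternant d v).coeff (∑ k, Finsupp.single (s S k) (d k)) := by
    rw [coeff_alternant hd hd0 (s S).injective, exteriorPower.basis_repr_apply,
      exteriorPower.ιMultiDual_apply_ιMulti]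
    rfl
  simp only [LinearMap.compAlternatingMap_apply, LinearMap.comp_apply,
    exteriorPower.alternatingMapLinearEquiv_apply_ιMulti, LinearMap.sum_apply,
    LinearMap.smulRight_apply, lcoeff_apply, ← hcoord, e.sum_repr, LinearMap.id_apply]

/-- The parametrization of the span of the Vandermonde determinants by an exterior power: it kills
`z` and is injective on the exterior power of the sum-zero vectors. -/
def vandermondeMap [DecidableEq α] (n : ℕ) (z : α → R) :
    ⋀[R]^n (α → R) →ₗ[R] MvPolynomial α R :=
  exteriorPower.alternatingMapLinearEquiv (alternant fun k : Fin n => (k : ℕ) + 1)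
    ∘ₗ exteriorPower.map n (Matrix.toLin' (1 - Matrix.vecMulVec z 1))

theorem vandermondeMap_ιMulti [DecidableEq α] {z : α → R} (hz : 1 ⬝ᵥ z = 1)
    (v : Fin n → α → R) :
    vandermondeMap n z (exteriorPower.ιMulti R n v)
      = alternant (Fin.val : Fin (n + 1) → ℕ) (Fin.cons z v) := by
  rw [alternant_cons hz, vandermondeMap, LinearMap.comp_apply, exteriorPower.map_apply_ιMulti,
    exteriorPower.alternatingMapLinearEquiv_apply_ιMulti]
  congr 1
  funext i
  rw [Function.comp_apply, Matrix.toLin'_apply, Matrix.sub_mulVec, Matrix.one_mulVec,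
    Matrix.vecMulVec_mulVec, op_smul_eq_smul]

theorem range_vandermondeMap [DecidableEq α] {z : α → R} (hz : 1 ⬝ᵥ z = 1) :
    LinearMap.range (vandermondeMap n z)
      = Submodule.span R (Set.range (alternant (Fin.val : Fin (n + 1) → ℕ))) := by
  apply le_antisymm
  · rw [LinearMap.range_eq_map, ← exteriorPower.ιMulti_span, Submodule.map_span, Submodule.span_le]
    rintro - ⟨-, ⟨v, rfl⟩, rfl⟩
    rw [vandermondeMap_ιMulti hz]
    exact Submodule.subset_span ⟨_, rfl⟩
  · rw [Submodule.span_le]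
    rintro - ⟨v, rfl⟩
    refine alternatingMap_mem_of_forall_basis_mem _ (Pi.basisFun R α) (fun u _ => ?_) v
    let y (i : Fin n) : α → R := Pi.single (u i.succ) 1 - Pi.single (u 0) 1
    refine ⟨exteriorPower.ιMulti R n y, ?_⟩
    rw [vandermondeMap_ιMulti hz, alternant_cons hz]
    have hcons : (fun i => Pi.basisFun R α (u i))
        = Fin.cons (Pi.single (u 0) 1) fun i : Fin n => Pi.single (u i.succ) 1 := by
      ext1 i
      induction i using Fin.cases <;> simp
    rw [hcons, alternant_cons (by simp)]
    simp [y]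

theorem vandermondeMap_comp_comp_vandermondeMap [DecidableEq α] {z : α → R} (hz : 1 ⬝ᵥ z = 1)
    {I : MvPolynomial α R →ₗ[R] ⋀[R]^n (α → R)}
    (hI : I ∘ₗ exteriorPower.alternatingMapLinearEquiv (alternant fun k : Fin n => (k : ℕ) + 1)
      = LinearMap.id) :
    vandermondeMap n z ∘ₗ I ∘ₗ vandermondeMap n z = vandermondeMap n z := by
  have hproj : (1 - Matrix.vecMulVec z 1) * (1 - Matrix.vecMulVec z 1)
      = (1 - Matrix.vecMulVec z 1 : Matrix α α R) := by
    rw [mul_sub, mul_one, sub_mul, one_mul, Matrix.vecMulVec_mul_vecMulVec, hz, one_smul, sub_self,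
      sub_zero]
  rw [vandermondeMap, ← LinearMap.comp_assoc _ _ I, hI, LinearMap.id_comp, LinearMap.comp_assoc,
    ← exteriorPower.map_comp, ← Matrix.toLin'_mul, hproj]

theorem comp_comp_vandermondeMap_eq_map [DecidableEq α] {z : α → R} (hz : 1 ⬝ᵥ z = 1)
    {I : MvPolynomial α R →ₗ[R] ⋀[R]^n (α → R)}
    (hI : I ∘ₗ exteriorPower.alternatingMapLinearEquiv (alternant fun k : Fin n => (k : ℕ) + 1)
      = LinearMap.id)
    {M : Matrix α α R} (hM : Matrix.vecMul 1 M = 1) {Φ : MvPolynomial α R →ₗ[R] MvPolynomial α R}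
    (hΦ : ∀ v : Fin (n + 1) → α → R,
      Φ (alternant Fin.val v) = alternant Fin.val fun i => M.mulVec (v i)) :
    I ∘ₗ Φ ∘ₗ vandermondeMap n z
      = exteriorPower.map n (Matrix.toLin' (M * (1 - Matrix.vecMulVec z 1))) := by
  refine exteriorPower.linearMap_ext (AlternatingMap.ext fun v => ?_)
  have hMz : 1 ⬝ᵥ M.mulVec z = 1 := by rw [Matrix.dotProduct_mulVec, hM, hz]
  have hcons : (fun i => M.mulVec ((Fin.cons z v : Fin (n + 1) → α → R) i))
      = Fin.cons (M.mulVec z) fun i => M.mulVec (v i) := by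
    ext1 i
    induction i using Fin.cases <;> simp
  have hIalternant (u : Fin n → α → R) :
      I (alternant (fun k : Fin n => (k : ℕ) + 1) u) = exteriorPower.ιMulti R n u := by
    rw [← exteriorPower.alternatingMapLinearEquiv_apply_ιMulti]
    exact LinearMap.congr_fun hI _
  simp only [LinearMap.compAlternatingMap_apply, LinearMap.comp_apply, vandermondeMap_ιMulti hz,
    hΦ, hcons, alternant_cons hMz, hIalternant, exteriorPower.map_apply_ιMulti]
  congr 1
  funext i
  rw [Function.comp_apply, Matrix.toLin'_apply, ← Matrix.mulVec_mulVec, Matrix.sub_mulVec,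
    Matrix.one_mulVec, Matrix.vecMulVec_mulVec, op_smul_eq_smul, Matrix.mulVec_sub,
    Matrix.mulVec_smul, Matrix.dotProduct_mulVec, hM]

theorem trace_restrict_span_alternant {K : Type*} [Field K] [DecidableEq α] [Nonempty α]
    {M : Matrix α α K} (hM : Matrix.vecMul 1 M = 1) {Φ : MvPolynomial α K →ₗ[K] MvPolynomial α K}
    (hΦ : ∀ v : Fin (n + 1) → α → K,
      Φ (alternant Fin.val v) = alternant Fin.val fun i => M.mulVec (v i))
    {W : Submodule K (MvPolynomial α K)}
    (hspan : W = Submodule.span K (Set.range (alternant (Fin.val : Fin (n + 1) → ℕ))))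
    (hW : ∀ f ∈ W, Φ f ∈ W) {D : Polynomial K} (hD : (1 + Polynomial.X) * D = detOneAddX M) :
    LinearMap.trace K W (Φ.restrict hW) = D.coeff n := by
  obtain ⟨a⟩ := ‹Nonempty α›
  have hz : 1 ⬝ᵥ (Pi.single a 1 : α → K) = 1 := by simp
  obtain ⟨I, hI⟩ := exists_comp_alternatingMapLinearEquiv_alternant_eq_id (α := α) (R := K)
    (d := fun k : Fin n => (k : ℕ) + 1) (fun i j h => Fin.ext (by simpa using h)) (by simp)
  have hD' : D = detOneAddX (M * (1 - Matrix.vecMulVec (Pi.single a 1) 1)) := by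
    refine mul_left_cancel₀ (Polynomial.monic_X_add_C (1 : K)).ne_zero ?_
    rw [Polynomial.C_1, add_comm, hD, one_add_X_mul_detOneAddX_mul_one_sub_vecMulVec hM hz]
  rw [trace_restrict_eq_trace_comp (vandermondeMap_comp_comp_vandermondeMap hz hI)
      ((range_vandermondeMap hz).trans hspan.symm), comp_comp_vandermondeMap_eq_map hz hI hM hΦ,
    trace_exteriorPower_map (Pi.basisFun K α), LinearMap.toMatrix_eq_toMatrix',
    LinearMap.toMatrix'_toLin', hD']

end Alternant

section HookSpan

variable {N b : ℕ}

theorem alternant_single_eq_smul_Delta (t : Fin (b + 1) → Fin N) :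
    alternant (Fin.val : Fin (b + 1) → ℕ) (fun i => Pi.single (t i) (1 : ℚ))
      = (-1 : ℚ) ^ #{q : Fin (b + 1) × Fin (b + 1) | q.1 < q.2} • Delta t := by
  have hvandermonde : alternant (Fin.val : Fin (b + 1) → ℕ) (fun i => Pi.single (t i) (1 : ℚ))
      = ∏ q : Fin (b + 1) × Fin (b + 1) with q.1 < q.2, (X (t q.2) - X (t q.1)) := by
    rw [alternant_single, ← Matrix.vandermonde, Matrix.det_vandermonde, Finset.prod_filter,
      Fintype.prod_prod_type]
    refine Finset.prod_congr rfl fun i _ => ?_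
    rw [← Finset.prod_filter]
    exact Finset.prod_congr (by ext; simp) fun _ _ => rfl
  rw [hvandermonde, Delta, MvPolynomial.smul_eq_C_mul, map_pow, map_neg, map_one,
    ← Finset.prod_const, ← Finset.prod_mul_distrib]
  exact Finset.prod_congr rfl fun q _ => by ring

theorem hookSpan_eq_span_alternant : hookSpan N b
    = Submodule.span ℚ (Set.range (alternant (α := Fin N) (Fin.val : Fin (b + 1) → ℕ))) := by
  have smul_Delta_mem {p : Submodule ℚ (MvPolynomial (Fin N) ℚ)} {t : Fin (b + 1) → Fin N} :
      alternant Fin.val (fun i => Pi.single (t i) (1 : ℚ)) ∈ p ↔ Delta t ∈ p := by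
    rw [alternant_single_eq_smul_Delta]
    exact p.smul_mem_iff (pow_ne_zero _ (neg_ne_zero.mpr one_ne_zero))
  apply le_antisymm
  · rw [hookSpan, Submodule.span_le]
    rintro - ⟨t, -, rfl⟩
    exact smul_Delta_mem.mp (Submodule.subset_span ⟨_, rfl⟩)
  · rw [Submodule.span_le]
    rintro - ⟨v, rfl⟩
    refine alternatingMap_mem_of_forall_basis_mem _ (Pi.basisFun ℚ (Fin N)) (fun u hu => ?_) v
    have hsort : StrictMono (u ∘ Tuple.sort u) :=
      (Tuple.monotone_sort u).strictMono_of_injective (hu.comp (Tuple.sort u).injective)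
    have hmem : alternant Fin.val ((fun i => Pi.single (u i) (1 : ℚ)) ∘ Tuple.sort u)
        ∈ hookSpan N b := smul_Delta_mem.mpr (Submodule.subset_span ⟨_, hsort, rfl⟩)
    rw [AlternatingMap.map_perm, Submodule.smul_mem_iff'] at hmem
    simpa only [Pi.basisFun_apply] using hmem

end HookSpan

theorem exists_perm_comp_eq_of_injective {ι α κ : Type*} {f : α → κ} {u t : ι → α}
    (hu : Function.Injective (f ∘ u)) (ht : f ∘ t = f ∘ u) :
    ∃ h : Equiv.Perm α, (∀ a, f (h a) = f a) ∧ h ∘ u = t := by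
  classical
  let σ : κ → Equiv.Perm α := Function.extend (f ∘ u) (fun i => Equiv.swap (u i) (t i)) 1
  have hσ_apply (i : ι) : σ (f (u i)) = Equiv.swap (u i) (t i) := hu.extend_apply _ _ i
  have hσ (j : κ) : (∀ a, σ j (σ j a) = a) ∧ ∀ a, f (σ j a) = f a := by
    by_cases hj : ∃ i, (f ∘ u) i = j
    · obtain ⟨i, rfl⟩ := hj
      have hti : f (t i) = f (u i) := congr_fun ht i
      simp only [Function.comp_apply, hσ_apply, Equiv.swap_apply_self, implies_true, true_and]
      intro a
      rw [Equiv.swap_apply_def]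
      split_ifs <;> simp_all
    · simp [σ, Function.extend_apply' _ _ _ hj]
  have hinvolutive : Function.Involutive fun a => σ (f a) a := fun a => by
    simp only [(hσ _).2, (hσ _).1]
  exact ⟨hinvolutive.toPerm, fun a => (hσ _).2 a, funext fun i => by simp [hσ_apply]⟩

theorem alternatingMap_single_eq_of_comp_eq {ι α κ K N : Type*} [Field K] [CharZero K]
    [DecidableEq α] [AddCommGroup N] [Module K N] {f : α → κ} {F : (α → K) [⋀^ι]→ₗ[K] N}
    (hF : ∀ h : Equiv.Perm α, (∀ a, f (h a) = f a) → ∀ v, (F fun i => v i ∘ h.symm) = F v)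
    {u t : ι → α} (ht : f ∘ t = f ∘ u) :
    F (fun i => Pi.single (t i) 1) = F fun i => Pi.single (u i) 1 := by
  classical
  have map_perm {h : Equiv.Perm α} (hh : ∀ a, f (h a) = f a) (u : ι → α) :
      F (fun i => Pi.single (h (u i)) 1) = F fun i => Pi.single (u i) 1 := by
    rw [← hF h hh fun i => Pi.single (u i) 1]
    congr 1
    ext i a
    simp [Pi.single_apply, Equiv.symm_apply_eq]
  have eq_zero {u : ι → α} (hu : ¬ Function.Injective (f ∘ u)) :
      F (fun i => Pi.single (u i) (1 : K)) = 0 := by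
    by_cases hinj : Function.Injective u
    · obtain ⟨i, j, hij, hne⟩ : ∃ i j, f (u i) = f (u j) ∧ i ≠ j := by
        simpa [Function.Injective] using hu
      have hswap (a : α) : f (Equiv.swap (u i) (u j) a) = f a := by
        rw [Equiv.swap_apply_def]
        split_ifs <;> simp_all
      have := IsAddTorsionFree.of_isTorsionFree K N
      refine self_eq_neg.mp ?_
      rw [← F.map_swap _ hne, ← map_perm hswap u]
      congr 1
      funext k
      simp [← hinj.swap_apply]
    · exact F.map_eq_zero_of_not_injective _ fun h => hinj fun i j hij => h (by simp only [hij])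
  by_cases hu : Function.Injective (f ∘ u)
  · obtain ⟨h, hh, rfl⟩ := exists_perm_comp_eq_of_injective hu ht
    exact map_perm hh u
  · rw [eq_zero hu, eq_zero (ht ▸ hu)]

section BlockAverage

variable {α κ : Type*} (K : Type*) [Field K]

/-- The matrix that sums the coordinates over each fibre of `f`. -/
def blockSum [DecidableEq κ] (f : α → κ) : Matrix κ α K :=
  Matrix.of fun j a => if f a = j then 1 else 0

/-- The matrix that spreads the `j`-th coordinate evenly over the fibre of `f` above `j`, so that
`blockMean K f * blockSum K f` replaces every coordinate by its mean over the fibre. -/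
def blockMean [Fintype α] [DecidableEq κ] (f : α → κ) : Matrix α κ K :=
  Matrix.of fun a j => if f a = j then (#{c | f c = j} : K)⁻¹ else 0

variable [DecidableEq κ] (f : α → κ)

theorem one_vecMul_blockSum [Fintype κ] : Matrix.vecMul 1 (blockSum K f) = 1 := by
  ext a
  simp [blockSum, Matrix.vecMul, dotProduct]

variable [Fintype α]

theorem blockMean_mulVec_apply [Fintype κ] (w : κ → K) (a : α) :
    (blockMean K f).mulVec w a = (#{c | f c = f a} : K)⁻¹ * w (f a) := by
  simp [blockMean, Matrix.mulVec, dotProduct]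

theorem blockSum_mulVec_comp_symm (g : Equiv.Perm α) (v : α → K) :
    (blockSum K f).mulVec (v ∘ g.symm) = (blockSum K (f ∘ g)).mulVec v := by
  ext j
  exact Fintype.sum_equiv g.symm _ _ fun a => by simp [blockSum]

theorem blockSum_mul_blockMean_apply (f' : α → κ) (j k : κ) :
    (blockSum K f' * blockMean K f) j k = #{a | f a = k ∧ f' a = j} / #{a | f a = k} := by
  simp only [blockSum, blockMean, Matrix.mul_apply, Matrix.of_apply, ite_mul, one_mul, zero_mul,
    ← ite_and, ← Finset.sum_filter, Finset.sum_const, nsmul_eq_mul, div_eq_mul_inv, and_comm]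

variable {K f}

theorem blockMean_mul_blockSum_apply_eq_zero [Fintype κ] {a c : α} (h : f a ≠ f c) :
    (blockMean K f * blockSum K f) a c = 0 := by
  simp [blockMean, blockSum, Matrix.mul_apply, h]

variable [CharZero K]

theorem one_vecMul_blockMean (hf : Function.Surjective f) :
    Matrix.vecMul 1 (blockMean K f) = 1 := by
  ext j
  obtain ⟨a, ha⟩ := hf j
  have hcard : (#{c | f c = j} : K) ≠ 0 :=
    Nat.cast_ne_zero.mpr (Finset.card_ne_zero_of_mem (a := a) (by simpa using ha))
  simp [blockMean, Matrix.vecMul, dotProduct, ← Finset.sum_filter, hcard]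

theorem alternatingMap_blockMean_mul_blockSum [Fintype κ] {ι N : Type*} [Finite ι]
    [AddCommGroup N] [Module K N] {F : (α → K) [⋀^ι]→ₗ[K] N} (hf : Function.Surjective f)
    (hF : ∀ h : Equiv.Perm α, (∀ a, f (h a) = f a) → ∀ v, (F fun i => v i ∘ h.symm) = F v)
    (v : ι → α → K) : F (fun i => (blockMean K f * blockSum K f).mulVec (v i)) = F v := by
  classical
  cases nonempty_fintype ι
  set A := blockMean K f * blockSum K f with hA
  suffices F.compLinearMap A.mulVecLin = F from DFunLike.congr_fun this v
  refine (Pi.basisFun K α).ext_alternating fun u _ => ?_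
  have hcol (a : α) : ∑ c, A c a = 1 := by
    have hvecMul : Matrix.vecMul 1 A = 1 := by
      rw [hA, ← Matrix.vecMul_vecMul, one_vecMul_blockMean hf, one_vecMul_blockSum]
    simpa [Matrix.vecMul, dotProduct] using congr_fun hvecMul a
  have hexpand (i : ι) : A.mulVecLin (Pi.basisFun K α (u i))
      = ∑ c, A c (u i) • Pi.single c (1 : K) := by
    ext c
    simp [Pi.single_apply]
  have hterm (t : ι → α) : (∏ i, A (t i) (u i)) • F (fun i => Pi.single (t i) (1 : K))
      = (∏ i, A (t i) (u i)) • F fun i => Pi.single (u i) 1 := by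
    by_cases ht : f ∘ t = f ∘ u
    · rw [alternatingMap_single_eq_of_comp_eq hF ht]
    · obtain ⟨i, hi⟩ : ∃ i, f (t i) ≠ f (u i) := by simpa [funext_iff] using ht
      rw [Finset.prod_eq_zero (Finset.mem_univ i) (blockMean_mul_blockSum_apply_eq_zero hi),
        zero_smul, zero_smul]
  calc F.compLinearMap A.mulVecLin (fun i => Pi.basisFun K α (u i))
      = F.toMultilinearMap fun i => ∑ c, A c (u i) • Pi.single c (1 : K) := by
        simp only [AlternatingMap.compLinearMap_apply, hexpand, AlternatingMap.coe_multilinearMap]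
    _ = ∑ t : ι → α, (∏ i, A (t i) (u i)) • F fun i => Pi.single (t i) (1 : K) := by
        simp only [MultilinearMap.map_sum, MultilinearMap.map_smul_univ,
          AlternatingMap.coe_multilinearMap]
    _ = (∏ i, ∑ c, A c (u i)) • F fun i => Pi.single (u i) (1 : K) := by
        rw [Finset.sum_congr rfl fun t _ => hterm t, ← Finset.sum_smul, Fintype.prod_sum]
    _ = F fun i => Pi.basisFun K α (u i) := by
        simp only [hcol, Finset.prod_const_one, one_smul, Pi.basisFun_apply]

end BlockAverage

theorem blockSum_comp_mul_blockMean_apply {K α κ : Type*} [Field K] [Fintype α] [DecidableEq κ]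
    {f : α → κ} {s : κ → α} (hs : ∀ k, f (s k) = k) {g : α → α} {σ : κ → κ}
    (hgs : ∀ k, g (s k) = s (σ k)) (hg : ∀ a, (∀ k, a ≠ s k) → g a = a) (j k : κ) :
    (blockSum K (f ∘ g) * blockMean K f) j k
      = ((if j = k then (#{a | f a = k} - 1 : K) else 0) + if j = σ k then 1 else 0)
        / #{a | f a = k} := by
  classical
  have hsk : s k ∈ ({a | f a = k} : Finset α) := by simp [hs]
  have hrest {a : α} (ha : a ∈ ({a | f a = k} : Finset α).erase (s k)) :
      (if (f ∘ g) a = j then (1 : K) else 0) = if j = k then 1 else 0 := by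
    obtain ⟨hne, hfa⟩ : a ≠ s k ∧ f a = k := by simpa using ha
    have hga : g a = a := hg a fun l hl => hne (by rw [hl, ← hfa, hl, hs])
    simp [hga, hfa, eq_comm]
  have hcard : (#(({a | f a = k} : Finset α).erase (s k)) : K) = #{a | f a = k} - 1 := by
    rw [Finset.card_erase_of_mem hsk, Nat.cast_pred (Finset.card_pos.mpr ⟨_, hsk⟩)]
  rw [blockSum_mul_blockMean_apply, ← Finset.filter_filter, ← Finset.sum_boole,
    ← Finset.sum_erase_add _ _ hsk, Finset.sum_congr rfl fun a => hrest, Finset.sum_const,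
    nsmul_eq_mul, hcard]
  simp [hgs, hs, eq_comm]

section YoungGroup

/-- The label of the block containing an index. -/
def block (n : Fin p → ℕ) (a : Fin (∑ t, n t)) : Fin p := (finSigmaFinEquiv.symm a).1

variable {n : Fin p → ℕ}

theorem emb_eq_finSigmaFinEquiv (j : Fin p) (i : Fin (n j)) :
    emb n j i = finSigmaFinEquiv ⟨j, i⟩ := by
  ext
  rw [finSigmaFinEquiv_apply, emb, Nat.add_right_cancel_iff]
  symm
  refine Finset.sum_nbij (Fin.castLE j.2.le) (fun t _ => ?_) ?_ (fun t ht => ?_) fun _ _ => rfl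
  · exact Finset.mem_filter.mpr ⟨Finset.mem_univ _, t.2⟩
  · exact (Fin.castLE_injective _).injOn
  · exact ⟨⟨t, by simpa using ht⟩, by simp⟩

theorem block_emb (j : Fin p) (i : Fin (n j)) : block n (emb n j i) = j := by
  rw [block, emb_eq_finSigmaFinEquiv, Equiv.symm_apply_apply]

theorem block_eq_iff {a : Fin (∑ t, n t)} {j : Fin p} : block n a = j ↔ ∃ i, emb n j i = a := by
  refine ⟨?_, fun ⟨i, hi⟩ => hi ▸ block_emb j i⟩
  rintro rfl
  exact ⟨_, (emb_eq_finSigmaFinEquiv _ _).trans (finSigmaFinEquiv.apply_symm_apply a)⟩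

theorem emb_injective (j : Fin p) : Function.Injective (emb n j) := fun _ _ h =>
  Fin.ext (Nat.add_left_cancel (congrArg Fin.val h))

theorem card_filter_block_eq (j : Fin p) : #{a | block n a = j} = n j := by
  have himage : ({a | block n a = j} : Finset _) = Finset.univ.image (emb n j) := by
    ext a
    simp [block_eq_iff]
  rw [himage, Finset.card_image_of_injective _ (emb_injective j), Finset.card_univ,
    Fintype.card_fin]

theorem block_surjective (hn : ∀ j, 0 < n j) : Function.Surjective (block n) :=
  fun j => ⟨emb n j ⟨0, hn j⟩, block_emb j _⟩

theorem mem_youngGroup {w : Equiv.Perm (Fin (∑ t, n t))} :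
    w ∈ youngGroup n ↔ ∀ a, block n (w a) = block n a := by
  simp only [youngGroup, Finset.mem_filter, Finset.mem_univ, true_and]
  refine ⟨fun h a => ?_, fun h j i => ?_⟩
  · obtain ⟨i, hi⟩ := block_eq_iff.mp (rfl : block n a = block n a)
    obtain ⟨i', hi'⟩ := h _ i
    rw [← hi, hi', block_emb, block_emb]
  · obtain ⟨i', hi'⟩ := block_eq_iff.mp ((h _).trans (block_emb j i))
    exact ⟨i', hi'.symm⟩

theorem card_youngGroup_ne_zero : ((youngGroup n).card : ℚ) ≠ 0 :=
  Nat.cast_ne_zero.mpr (Finset.card_ne_zero_of_mem (a := 1) (mem_youngGroup.mpr fun _ => rfl))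

theorem rho_permAct {h : Equiv.Perm (Fin (∑ t, n t))} (hh : h ∈ youngGroup n)
    (f : MvPolynomial (Fin (∑ t, n t)) ℚ) : rho n (permAct h f) = rho n f := by
  simp only [rho, LinearMap.smul_apply, LinearMap.sum_apply]
  congr 1
  refine Finset.sum_equiv (Equiv.mulRight h) (fun w => ?_) fun w _ => ?_
  · rw [mem_youngGroup] at hh
    simp only [mem_youngGroup, Equiv.coe_mulRight, Equiv.Perm.mul_apply]
    refine ⟨fun hw a => (hw _).trans (hh a), fun hw a => ?_⟩
    rw [← h.apply_symm_apply a, hw, hh]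
  · exact rename_rename _ _ f

theorem rho_eq_self {f : MvPolynomial (Fin (∑ t, n t)) ℚ}
    (hf : ∀ h ∈ youngGroup n, permAct h f = f) : rho n f = f := by
  rw [rho, LinearMap.smul_apply, LinearMap.sum_apply, Finset.sum_congr rfl hf, Finset.sum_const,
    ← Nat.cast_smul_eq_nsmul ℚ, inv_smul_smul₀ card_youngGroup_ne_zero]

theorem rho_alternant (hn : ∀ j, 0 < n j) {m : ℕ} (d : Fin m → ℕ)
    (v : Fin m → Fin (∑ t, n t) → ℚ) :
    rho n (alternant d v)
      = alternant d fun i => (blockMean ℚ (block n) * blockSum ℚ (block n)).mulVec (v i) := by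
  have hinv (h : Equiv.Perm (Fin (∑ t, n t))) (hh : ∀ a, block n (h a) = block n a)
      (v : Fin m → Fin (∑ t, n t) → ℚ) :
      (rho n).compAlternatingMap (alternant d) (fun i => v i ∘ h.symm)
        = (rho n).compAlternatingMap (alternant d) v := by
    simp only [LinearMap.compAlternatingMap_apply, ← rename_alternant]
    exact rho_permAct (mem_youngGroup.mpr hh) _
  refine (alternatingMap_blockMean_mul_blockSum (block_surjective hn) hinv v).symm.trans ?_
  refine rho_eq_self fun h hh => (rename_alternant h d _).trans ?_
  refine congrArg (alternant d) (funext fun i => funext fun a => ?_)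
  have hsymm : block n (h.symm a) = block n a := by
    rw [← mem_youngGroup.mp hh, h.apply_symm_apply]
  simp only [Function.comp_apply, ← Matrix.mulVec_mulVec, blockMean_mulVec_apply, hsymm]

theorem rho_permAct_alternant (hn : ∀ j, 0 < n j) (g : Equiv.Perm (Fin (∑ t, n t))) {m : ℕ}
    (d : Fin m → ℕ) (v : Fin m → Fin (∑ t, n t) → ℚ) :
    rho n (permAct g (alternant d v)) = alternant d fun i =>
      (blockMean ℚ (block n) * blockSum ℚ (block n ∘ g)).mulVec (v i) := by
  have hrename : permAct g (alternant d v) = alternant d fun i => v i ∘ g.symm :=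
    rename_alternant g d v
  simp only [hrename, rho_alternant hn, ← Matrix.mulVec_mulVec, blockSum_mulVec_comp_symm]

theorem trace_rho_permAct (hn : ∀ j, 0 < n j) (hp : 0 < p) (g : Equiv.Perm (Fin (∑ t, n t)))
    {b : ℕ}
    (hW : ∀ f ∈ hookSpan (∑ t, n t) b, (rho n ∘ₗ permAct g) f ∈ hookSpan (∑ t, n t) b)
    {D : Polynomial ℚ} (hD : (1 + Polynomial.X) * D
      = detOneAddX (blockSum ℚ (block n ∘ g) * blockMean ℚ (block n))) :
    LinearMap.trace ℚ (hookSpan (∑ t, n t) b) ((rho n ∘ₗ permAct g).restrict hW) = D.coeff b := by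
  have : Nonempty (Fin (∑ t, n t)) := ⟨emb n ⟨0, hp⟩ ⟨0, hn _⟩⟩
  refine trace_restrict_span_alternant ?_ (rho_permAct_alternant hn g Fin.val)
    hookSpan_eq_span_alternant hW (hD.trans (detOneAddX_mul_comm _ _))
  rw [← Matrix.vecMul_vecMul, one_vecMul_blockMean (block_surjective hn), one_vecMul_blockSum]

end YoungGroup

section Cycle

theorem det_diagonal_add_finRotate {R : Type*} [CommRing R] [NeZero p] (c d : Fin p → R) :
    (Matrix.of fun i j =>
        (if i = j then d j else 0) + if i = finRotate p j then c j else 0).det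
      = ∏ j, d j - ∏ j, -c j := by
  obtain _ | _ | m := p
  · exact absurd rfl (NeZero.ne 0)
  · simp [Subsingleton.elim (finRotate 1) 1]
  · rw [det_diagonal_add_cycle isCycle_finRotate support_finRotate, sign_finRotate,
      Finset.prod_neg, Finset.card_univ, Fintype.card_fin]
    push_cast
    ring

theorem detOneAddX_diagonal_add_finRotate {R : Type*} [CommRing R] [NeZero p] (a c : Fin p → R) :
    detOneAddX (Matrix.of fun i j =>
        (if i = j then a j else 0) + if i = finRotate p j then c j else 0)
      = ∏ j, (1 + Polynomial.C (a j) * Polynomial.X)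
        - ∏ j, -(Polynomial.C (c j) * Polynomial.X) := by
  rw [← det_diagonal_add_finRotate, detOneAddX]
  congr 1
  ext1 i j
  simp only [Matrix.add_apply, Matrix.one_apply, Matrix.smul_apply, Matrix.map_apply,
    Matrix.of_apply, smul_eq_mul, map_add, apply_ite Polynomial.C, map_zero]
  split_ifs <;> ring

theorem prod_one_add_smul_eq_sum_esymVal {α F S : Type*} [DecidableEq α] [CommRing F] [CommRing S]
    [Algebra F S] (A : Finset α) (v : α → F) (q : S) :
    ∏ i ∈ A, (1 + v i • q) = ∑ k ∈ Finset.range (#A + 1), esymVal A k v • q ^ k := by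
  rw [Finset.prod_one_add, Finset.sum_powerset]
  refine Finset.sum_congr rfl fun k _ => ?_
  rw [esymVal, Finset.sum_smul]
  refine Finset.sum_congr rfl fun B hB => ?_
  rw [Finset.prod_smul, Finset.prod_const, (Finset.mem_powersetCard.mp hB).2]

theorem poch_natCast_add_one_div_factorial (b r : ℕ) :
    poch ((b : ℚ) + 1) r / r.factorial = (b + r).choose b := by
  have hpoch : poch ((b : ℚ) + 1) r = (b + 1).ascFactorial r := by
    rw [poch, Nat.ascFactorial_eq_prod_range]
    push_cast
    rfl
  rw [hpoch, Nat.ascFactorial_eq_factorial_mul_choose, Nat.choose_symm_add, Nat.cast_mul,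
    mul_div_cancel_left₀ _ (Nat.cast_ne_zero.mpr r.factorial_ne_zero)]

theorem sum_choose_mul_eq_sum_poch {b : ℕ} (hb : b < p) (e : ℕ → ℚ) :
    ∑ k ∈ Finset.range p, (k.choose b : ℚ) * e (k + 1)
      = ∑ k ∈ Finset.range (p - b - 1 + 1),
          poch ((b : ℚ) + 1) (p - b - 1 - k) / (p - b - 1 - k).factorial * e (p - k) := by
  rw [← Finset.sum_range_reflect,
    ← Finset.sum_subset (Finset.range_subset_range.2 (show p - b - 1 + 1 ≤ p by omega))]
  · refine Finset.sum_congr rfl fun k hk => ?_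
    rw [Finset.mem_range] at hk
    rw [poch_natCast_add_one_div_factorial, show b + (p - b - 1 - k) = p - 1 - k by omega,
      show p - 1 - k + 1 = p - k by omega]
  · intro k hkp hk
    rw [Finset.mem_range] at hkp hk
    rw [Nat.choose_eq_zero_of_lt (by omega), Nat.cast_zero, zero_mul]

/-- The quotient by `1 + X` of the characteristic polynomial `det (1 + X Q)` attached to a cycle
through the first elements of blocks of sizes `u j + 1`, up to the factor `∏ j, (u j + 1)`. -/
def cycleQuotient {F : Type*} [CommRing F] (u : Fin p → F) : Polynomial F :=
  ∑ k ∈ Finset.range p, esymVal Finset.univ (k + 1) u • (1 + Polynomial.X) ^ k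
    + ∑ k ∈ Finset.range p, (-Polynomial.X) ^ k

theorem one_add_X_mul_cycleQuotient {F : Type*} [CommRing F] (u : Fin p → F) :
    (1 + Polynomial.X) * cycleQuotient u
      = ∏ j, (1 + u j • (1 + Polynomial.X)) - (-Polynomial.X) ^ p := by
  have hgeom := mul_neg_geom_sum (-Polynomial.X : Polynomial F) p
  rw [sub_neg_eq_add] at hgeom
  have hzero : esymVal Finset.univ 0 u = 1 := by simp [esymVal]
  rw [prod_one_add_smul_eq_sum_esymVal, Finset.card_univ, Fintype.card_fin, Finset.sum_range_succ',
    cycleQuotient, mul_add, hgeom, Finset.mul_sum, hzero, pow_zero, one_smul]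
  simp only [mul_smul_comm, ← pow_succ']
  ring

theorem coeff_cycleQuotient {F : Type*} [CommRing F] (u : Fin p → F) {b : ℕ} (hb : b < p) :
    (cycleQuotient u).coeff b
      = ∑ k ∈ Finset.range p, (k.choose b : F) * esymVal Finset.univ (k + 1) u + (-1) ^ b := by
  simp only [cycleQuotient, Polynomial.coeff_add, Polynomial.finsetSum_coeff,
    Polynomial.coeff_smul, Polynomial.coeff_one_add_X_pow, smul_eq_mul]
  congr 1
  · exact Finset.sum_congr rfl fun k _ => mul_comm _ _
  · have hneg (k : ℕ) :
        (-Polynomial.X : Polynomial F) ^ k = Polynomial.C ((-1) ^ k) * Polynomial.X ^ k := by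
      rw [neg_pow, map_pow, map_neg, map_one]
    simp only [hneg, Polynomial.coeff_C_mul, Polynomial.coeff_X_pow, mul_ite, mul_one, mul_zero,
      Finset.sum_ite_eq, Finset.mem_range, hb, if_true]

theorem trace_rho_permAct_of_cycle [NeZero p] {n : Fin p → ℕ} (hn : ∀ j, 0 < n j)
    {g : Equiv.Perm (Fin (∑ t, n t))}
    (hgs : ∀ j, g (emb n j ⟨0, hn j⟩) = emb n (finRotate p j) ⟨0, hn _⟩)
    (hg : ∀ a, (∀ j, a ≠ emb n j ⟨0, hn j⟩) → g a = a) {b : ℕ} (hb : b < p)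
    (hW : ∀ f ∈ hookSpan (∑ t, n t) b, (rho n ∘ₗ permAct g) f ∈ hookSpan (∑ t, n t) b) :
    LinearMap.trace ℚ (hookSpan (∑ t, n t) b) ((rho n ∘ₗ permAct g).restrict hW)
      = (∏ j, (n j : ℚ))⁻¹ * (∑ k ∈ Finset.range p,
          (k.choose b : ℚ) * esymVal Finset.univ (k + 1) (fun j => (n j : ℚ) - 1) + (-1) ^ b) := by
  have hn0 (j : Fin p) : (n j : ℚ) ≠ 0 := Nat.cast_ne_zero.mpr (hn j).ne'
  have hmatrix : blockSum ℚ (block n ∘ g) * blockMean ℚ (block n)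
      = Matrix.of fun i j => (if i = j then ((n j : ℚ) - 1) / n j else 0)
        + if i = finRotate p j then (n j : ℚ)⁻¹ else 0 := by
    ext1 i j
    rw [blockSum_comp_mul_blockMean_apply (fun _ => block_emb _ _) hgs hg, card_filter_block_eq,
      Matrix.of_apply, add_div, ite_div, ite_div, zero_div, one_div]
  have hfactor (j : Fin p) :
      (1 + Polynomial.C (((n j : ℚ) - 1) / n j) * Polynomial.X : Polynomial ℚ)
        = Polynomial.C (n j : ℚ)⁻¹ * (1 + ((n j : ℚ) - 1) • (1 + Polynomial.X)) := by
    have hinv : Polynomial.C (n j : ℚ)⁻¹ * Polynomial.C (n j : ℚ) = 1 := by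
      rw [← map_mul, inv_mul_cancel₀ (hn0 j), map_one]
    rw [Polynomial.smul_eq_C_mul, div_eq_inv_mul, map_mul, map_sub, map_one]
    linear_combination -hinv
  rw [← coeff_cycleQuotient _ hb, ← Polynomial.coeff_C_mul]
  refine trace_rho_permAct hn (NeZero.pos p) g hW ?_
  rw [hmatrix, detOneAddX_diagonal_add_finRotate, mul_left_comm, one_add_X_mul_cycleQuotient]
  simp only [hfactor, ← mul_neg, Finset.prod_mul_distrib, Finset.prod_const, Finset.card_univ,
    Fintype.card_fin, ← mul_sub, ← map_prod, Finset.prod_inv_distrib]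

end Cycle

theorem sphericalFunction_hook_l_eq_p_general (p b ℓ : ℕ) (n : Fin p → ℕ) (hn : ∀ j, 0 < n j)
    (hb : b < p) (hℓ : ℓ = p)
    (g : Equiv.Perm (Fin (∑ t, n t)))
    (hg1 : ∀ j k : Fin p, (k : ℕ) = (j : ℕ) + 1 → (k : ℕ) < ℓ →
      g (emb n j ⟨0, hn j⟩) = emb n k ⟨0, hn k⟩)
    (hg2 : ∀ j j' : Fin p, (j : ℕ) = ℓ - 1 → (j' : ℕ) = 0 →
      g (emb n j ⟨0, hn j⟩) = emb n j' ⟨0, hn j'⟩)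
    (hg3 : ∀ a, (∀ j : Fin p, (j : ℕ) < ℓ → a ≠ emb n j ⟨0, hn j⟩) → g a = a)
    (hW : ∀ f ∈ hookSpan (∑ t, n t) b,
      ((rho n).comp (permAct g)) f ∈ hookSpan (∑ t, n t) b) :
    LinearMap.trace ℚ (hookSpan (∑ t, n t) b) (((rho n).comp (permAct g)).restrict hW)
      = (∏ i ∈ firstL p ℓ, (n i : ℚ))⁻¹ *
        ((∑ k ∈ Finset.range (p - b - 1 + 1),
            poch ((b : ℚ) + 1) (p - b - 1 - k) / (Nat.factorial (p - b - 1 - k)) *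
              esymVal (firstL p ℓ) (ℓ - k) (fun i => (n i : ℚ) - 1))
          + (-1 : ℚ) ^ b) := by
  subst hℓ
  obtain ⟨m, rfl⟩ := Nat.exists_eq_succ_of_ne_zero hb.ne_bot
  have hfirst : firstL (m + 1) (m + 1) = Finset.univ :=
    Finset.filter_true_of_mem fun i _ => i.isLt
  have hgs (j : Fin (m + 1)) :
      g (emb n j ⟨0, hn j⟩) = emb n (finRotate (m + 1) j) ⟨0, hn _⟩ := by
    by_cases hj : j = Fin.last m
    · exact hg2 j _ (by simp [hj]) (by simp [hj])
    · exact hg1 j _ (coe_finRotate_of_ne_last hj) (finRotate (m + 1) j).isLt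
  rw [trace_rho_permAct_of_cycle hn hgs (fun a ha => hg3 a fun j _ => ha j) hb hW, hfirst,
    sum_choose_mul_eq_sum_poch hb fun k => esymVal Finset.univ k fun i => (n i : ℚ) - 1]

theorem sphericalFunction_hook_l_eq_p (p b ℓ : ℕ) (n : Fin p → ℕ) (hn : ∀ j, 0 < n j)
    (hm : b + 2 ≤ p) (hℓ : ℓ = p)
    (g : Equiv.Perm (Fin (∑ t, n t)))
    (hg1 : ∀ j k : Fin p, (k : ℕ) = (j : ℕ) + 1 → (k : ℕ) < ℓ →
      g (emb n j ⟨0, hn j⟩) = emb n k ⟨0, hn k⟩)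
    (hg2 : ∀ j j' : Fin p, (j : ℕ) = ℓ - 1 → (j' : ℕ) = 0 →
      g (emb n j ⟨0, hn j⟩) = emb n j' ⟨0, hn j'⟩)
    (hg3 : ∀ a, (∀ j : Fin p, (j : ℕ) < ℓ → a ≠ emb n j ⟨0, hn j⟩) → g a = a)
    (hW : ∀ f ∈ hookSpan (∑ t, n t) b,
      ((rho n).comp (permAct g)) f ∈ hookSpan (∑ t, n t) b) :
    LinearMap.trace ℚ (hookSpan (∑ t, n t) b) (((rho n).comp (permAct g)).restrict hW)
      = (∏ i ∈ firstL p ℓ, (n i : ℚ))⁻¹ *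
        ((∑ k ∈ Finset.range (p - b - 1 + 1),
            poch ((b : ℚ) + 1) (p - b - 1 - k) / (Nat.factorial (p - b - 1 - k)) *
              esymVal (firstL p ℓ) (ℓ - k) (fun i => (n i : ℚ) - 1))
          + (-1 : ℚ) ^ b) :=
  sphericalFunction_hook_l_eq_p_general p b ℓ n hn (by omega) hℓ g hg1 hg2 hg3 hW

end
end

section
/- Let b ≥ 0, m ≥ 0, let 2 ≤ ℓ ≤ b+m+1, and let n_1,…,n_ℓ be positive integers. Then (1/(n_1⋯n_ℓ))·{ Σ_{k=0}^{min(m,ℓ)} ((b+1)_{m−k}/(m−k)!) · e_{ℓ−k}(n_1−1,…,n_ℓ−1) + (−1)^{ℓ+1} · (b−ℓ+1)_m / m! } = C(b+m, b) + Σ_{i=1}^{min(b,ℓ−1)} (−1)^i · C(b+m−i, b−i) · e_i(1/n_1,…,1/n_ℓ), where (b−ℓ+1)_m = ∏_{i=0}^{m−1}(b−ℓ+1+i) (an integer, with possibly negative base) and C(·,·) is the binomial coefficient. -/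
noncomputable section

/-!
Write `(r)_k / k!` as `Ring.multichoose r k`, whose generating series is `(1 - X)⁻ʳ`. Up to the
factor `∏ nᵢ`, both sides come from the coefficient of `X ^ m` in
`∏ (X + nᵢ - 1) * (1 - X) ^ (-(b + 1))`. Expanding the product in powers of `X` gives the sum on the
left. Since `X + nᵢ - 1 = nᵢ * (1 - nᵢ⁻¹ * (1 - X))`, the product also expands in powers of `1 - X`,
each factor of which lowers `b + 1` by one; this gives the sum on the right. The term `i = ℓ`
of the second expansion is the one that appears on the left with sign `(-1) ^ (ℓ + 1)`, and the
terms with `b < i < ℓ` vanish because `-m < b + 1 - i ≤ 0`.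
-/

section

open Finset PowerSeries

variable {ι R A : Type*} [CommRing A]

theorem coe_prod_X_add_C (s : Finset ι) (w : ι → A) :
    ((∏ i ∈ s, (Polynomial.X + Polynomial.C (w i)) : Polynomial A) : A⟦X⟧) =
      ∏ i ∈ s, (X + C (w i)) := by
  rw [← Polynomial.coeToPowerSeries.ringHom_apply, map_prod]
  simp

theorem coeff_prod_X_add_C_of_card_lt {s : Finset ι} {k : ℕ} (hk : #s < k) (w : ι → A) :
    coeff k (∏ i ∈ s, (X + C (w i))) = 0 := by
  rw [← coe_prod_X_add_C, Polynomial.coeff_coe]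
  refine Polynomial.coeff_eq_zero_of_natDegree_lt (lt_of_le_of_lt ?_ hk)
  have degree_le : ∀ i ∈ s, (Polynomial.X + Polynomial.C (w i)).natDegree ≤ 1 := fun i _ => by
    compute_degree
  simpa using (Polynomial.natDegree_prod_le _ _).trans (sum_le_sum degree_le)

theorem prod_X_add_C_sub_one {s : Finset ι} {x y : ι → A} (hxy : ∀ i ∈ s, x i * y i = 1) :
    ∏ i ∈ s, (X + C (x i - 1)) = C (∏ i ∈ s, x i) * ∏ i ∈ s, (1 - C (y i) * (1 - X)) := by
  rw [map_prod, ← prod_mul_distrib]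
  refine prod_congr rfl fun i hi => ?_
  have h : C (x i) * C (y i) = 1 := by rw [← map_mul, hxy i hi, map_one]
  rw [map_sub, map_one]
  linear_combination (1 - X) * h

section

variable [DecidableEq ι]

theorem esymVal_zero (s : Finset ι) (v : ι → A) : esymVal s 0 v = 1 := by
  simp [esymVal]

theorem esymVal_card (s : Finset ι) (v : ι → A) : esymVal s #s v = ∏ i ∈ s, v i := by
  simp [esymVal]

theorem prod_one_sub_mul_eq_sum_esymVal (s : Finset ι) (v : ι → A) (t : A) :
    ∏ i ∈ s, (1 - v i * t) = ∑ k ∈ range (#s + 1), (-1) ^ k * esymVal s k v * t ^ k := by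
  simp only [sub_eq_add_neg, prod_one_add, sum_powerset, esymVal, mul_sum, sum_mul]
  refine sum_congr rfl fun k _ => sum_congr rfl fun B hB => ?_
  rw [prod_neg, prod_mul_distrib, prod_const, (mem_powersetCard.1 hB).2, mul_assoc]

theorem map_esymVal {B : Type*} [CommRing B] (f : A →+* B) (s : Finset ι) (k : ℕ) (v : ι → A) :
    f (esymVal s k v) = esymVal s k fun i => f (v i) := by
  simp only [esymVal, map_sum, map_prod]

theorem coeff_prod_X_add_C {s : Finset ι} {k : ℕ} (hk : k ≤ #s) (w : ι → A) :
    coeff k (∏ i ∈ s, (X + C (w i))) = esymVal s (#s - k) w := by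
  rw [← coe_prod_X_add_C, Polynomial.coeff_coe, prod_X_add_C_coeff _ _ hk, esymVal]

theorem coeff_prod_X_add_C_mul (s : Finset ι) (w : ι → A) (f : A⟦X⟧) (m : ℕ) :
    coeff m ((∏ i ∈ s, (X + C (w i))) * f) =
      ∑ k ∈ range (min m #s + 1), coeff (m - k) f * esymVal s (#s - k) w := by
  rw [coeff_mul, Nat.sum_antidiagonal_eq_sum_range_succ_mk]
  symm
  refine sum_subset_zero_on_sdiff (range_subset_range.2 (by omega)) (fun k hk => ?_) fun k hk => ?_
  · simp only [mem_sdiff, mem_range] at hk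
    rw [coeff_prod_X_add_C_of_card_lt (by omega), zero_mul]
  · rw [mem_range] at hk
    rw [coeff_prod_X_add_C (by omega), mul_comm]

end

section

variable [CommRing R] [BinomialRing R] [Algebra R A]

variable (A) in
/-- The power series `(1 - X)⁻ʳ`, i.e. the generating series of the numbers `(r)_k / k!`. The
exponent `r` may lie in any binomial ring over which the coefficients form an algebra. -/
def multichooseSeries (r : R) : A⟦X⟧ := PowerSeries.mk fun k => Ring.multichoose r k • (1 : A)

@[simp]
theorem coeff_multichooseSeries (r : R) (k : ℕ) :
    coeff k (multichooseSeries A r) = Ring.multichoose r k • (1 : A) :=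
  coeff_mk _ _

theorem one_sub_X_mul_multichooseSeries (r : R) :
    (1 - X) * multichooseSeries A r = multichooseSeries A (r - 1) := by
  ext k
  cases k with
  | zero => simp [sub_mul, coeff_zero_X_mul, -coeff_zero_eq_constantCoeff]
  | succ k =>
    have pascal := Ring.multichoose_succ_succ (r - 1) k
    rw [sub_add_cancel] at pascal
    simp [sub_mul, coeff_succ_X_mul, pascal, add_smul]

theorem one_sub_X_pow_mul_multichooseSeries (r : R) (i : ℕ) :
    (1 - X) ^ i * multichooseSeries A r = multichooseSeries A (r - i) := by
  induction i with
  | zero => simp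
  | succ i ih =>
    rw [pow_succ', mul_assoc, ih, one_sub_X_mul_multichooseSeries, Nat.cast_succ, sub_sub]

variable [DecidableEq ι]

theorem coeff_prod_one_sub_mul_multichooseSeries (s : Finset ι) (v : ι → A) (r : R) (m : ℕ) :
    coeff m ((∏ i ∈ s, (1 - C (v i) * (1 - X))) * multichooseSeries A r) =
      ∑ i ∈ range (#s + 1), (-1) ^ i * Ring.multichoose (r - i) m • esymVal s i v := by
  rw [prod_one_sub_mul_eq_sum_esymVal, sum_mul, map_sum]
  refine sum_congr rfl fun i _ => ?_
  have h : (-1) ^ i * esymVal s i (fun j => C (v j)) = C ((-1) ^ i * esymVal s i v) := by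
    simp [map_esymVal]
  rw [h, mul_assoc, one_sub_X_pow_mul_multichooseSeries, coeff_C_mul, coeff_multichooseSeries,
    mul_smul_comm, mul_one, mul_smul_comm]

theorem sum_multichoose_smul_esymVal_sub_one {s : Finset ι} {x y : ι → A}
    (hxy : ∀ i ∈ s, x i * y i = 1) (r : R) (m : ℕ) :
    ∑ k ∈ range (min m #s + 1), Ring.multichoose r (m - k) • esymVal s (#s - k) (fun i => x i - 1) =
      (∏ i ∈ s, x i) *
        ∑ i ∈ range (#s + 1), (-1) ^ i * Ring.multichoose (r - i) m • esymVal s i y := by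
  rw [← coeff_prod_one_sub_mul_multichooseSeries, ← coeff_C_mul, ← mul_assoc,
    ← prod_X_add_C_sub_one hxy, coeff_prod_X_add_C_mul]
  simp

end

theorem multichoose_add_one_sub_of_le {b i : ℕ} (hi : i ≤ b) (m : ℕ) :
    Ring.multichoose ((b : ℤ) + 1 - i) m = (b + m - i).choose (b - i) := by
  obtain ⟨c, rfl⟩ := Nat.exists_eq_add_of_le hi
  have h : ((i + c : ℕ) : ℤ) + 1 - i + m - 1 = (c + m : ℕ) := by push_cast; ring
  rw [Ring.multichoose_eq, h, Ring.choose_natCast, add_assoc, Nat.add_sub_cancel_left,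
    Nat.add_sub_cancel_left, Nat.choose_symm_add]

theorem multichoose_add_one_sub_of_lt {b m i : ℕ} (hb : b < i) (hm : i ≤ b + m) :
    Ring.multichoose ((b : ℤ) + 1 - i) m = 0 := by
  obtain ⟨d, rfl⟩ := Nat.exists_eq_add_of_lt hb
  have h : (b : ℤ) + 1 - (b + d + 1 : ℕ) = -d := by push_cast; ring
  rw [h, Ring.multichoose_neg_of_lt _ _ (by omega)]

theorem sum_range_multichoose_add_one_sub {b m ℓ : ℕ} (hℓ₁ : 1 ≤ ℓ) (hℓ : ℓ ≤ b + m + 1)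
    (c : ℕ → A) :
    ∑ i ∈ range ℓ, (-1) ^ i * Ring.multichoose ((b : ℤ) + 1 - i) m • c i =
      (b + m).choose b * c 0 +
        ∑ i ∈ Icc 1 (min b (ℓ - 1)), (-1) ^ i * (b + m - i).choose (b - i) * c i := by
  have truncate : ∑ i ∈ range (min b (ℓ - 1) + 1), (-1) ^ i * (b + m - i).choose (b - i) * c i =
      ∑ i ∈ range ℓ, (-1) ^ i * Ring.multichoose ((b : ℤ) + 1 - i) m • c i := by
    refine sum_subset_zero_on_sdiff (range_subset_range.2 (by omega)) (fun i hi => ?_)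
      fun i hi => ?_
    · simp only [mem_sdiff, mem_range] at hi
      rw [multichoose_add_one_sub_of_lt (by omega) (by omega), zero_smul, mul_zero]
    · rw [mem_range] at hi
      rw [multichoose_add_one_sub_of_le (by omega), natCast_zsmul, nsmul_eq_mul, mul_assoc]
  rw [← truncate, range_eq_Ico, sum_eq_sum_Ico_succ_bot (Nat.succ_pos _)]
  simp [Ico_add_one_right_eq_Icc]

/-- `Ring.multichoose a k` is the integer `(a)_k / k!`, so no division is left and the coefficients
may be taken in any commutative ring. -/
theorem formula_equivalence_general [DecidableEq ι] (b m : ℕ) {s : Finset ι} (hs : s.Nonempty)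
    (hcard : #s ≤ b + m + 1) {x y : ι → A} (hxy : ∀ i ∈ s, x i * y i = 1) :
    (∏ i ∈ s, y i) *
        ((∑ k ∈ range (min m #s + 1),
            ((Ring.multichoose ((b : ℤ) + 1) (m - k) : ℤ) : A) *
              esymVal s (#s - k) (fun i => x i - 1))
          + (-1) ^ (#s + 1) * ((Ring.multichoose ((b : ℤ) - #s + 1) m : ℤ) : A)) =
      (b + m).choose b +
        ∑ i ∈ Icc 1 (min b (#s - 1)), (-1) ^ i * (b + m - i).choose (b - i) * esymVal s i y := by
  have hprod : (∏ i ∈ s, y i) * ∏ i ∈ s, x i = 1 := by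
    rw [← prod_mul_distrib]
    exact prod_eq_one fun i hi => by rw [mul_comm, hxy i hi]
  have expand := sum_multichoose_smul_esymVal_sub_one hxy ((b : ℤ) + 1) m
  rw [sum_range_succ _ #s, esymVal_card,
    sum_range_multichoose_add_one_sub hs.card_pos hcard, esymVal_zero] at expand
  simp only [zsmul_eq_mul, add_sub_right_comm] at expand
  rw [expand, mul_add, ← mul_assoc, hprod]
  ring

end

theorem poch_eq_eval_ascPochhammer (a : ℚ) (k : ℕ) : poch a k = (ascPochhammer ℚ k).eval a := by
  induction k with
  | zero => simp [poch]
  | succ k ih => rw [ascPochhammer_succ_eval, ← ih, poch, poch, Finset.prod_range_succ]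

theorem intCast_multichoose (r : ℤ) (k : ℕ) :
    ((Ring.multichoose r k : ℤ) : ℚ) = poch r k / k.factorial := by
  rw [eq_div_iff (by positivity), mul_comm, ← nsmul_eq_mul, poch_eq_eval_ascPochhammer,
    ← Polynomial.ascPochhammer_smeval_eq_eval, ← Ring.factorial_nsmul_multichoose_eq_ascPochhammer]
  exact congrArg _ (Ring.map_multichoose (Int.castRingHom ℚ) r k)

/-- Proposition 6.1: the equivalence of formulas (1.1) and (1.2). -/
theorem formula_equivalence (b m ℓ : ℕ) (hℓ2 : 2 ≤ ℓ) (hℓ : ℓ ≤ b + m + 1)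
    (n : ℕ → ℕ) (hn : ∀ i ∈ Finset.Icc 1 ℓ, 0 < n i) :
    (∏ i ∈ Finset.Icc 1 ℓ, (n i : ℚ))⁻¹ *
        ((∑ k ∈ Finset.range (min m ℓ + 1),
            poch ((b : ℚ) + 1) (m - k) / (Nat.factorial (m - k)) *
              esymVal (Finset.Icc 1 ℓ) (ℓ - k) (fun i => (n i : ℚ) - 1))
          + (-1 : ℚ) ^ (ℓ + 1) * poch ((b : ℚ) - (ℓ : ℚ) + 1) m / (Nat.factorial m))
      = ((b + m).choose b : ℚ)
        + ∑ i ∈ Finset.Icc 1 (min b (ℓ - 1)), (-1 : ℚ) ^ i * ((b + m - i).choose (b - i) : ℚ) *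
            esymVal (Finset.Icc 1 ℓ) i (fun j => ((n j : ℚ))⁻¹) := by
  have hn₀ : ∀ i ∈ Finset.Icc 1 ℓ, (n i : ℚ) * (n i : ℚ)⁻¹ = 1 := fun i hi =>
    mul_inv_cancel₀ (Nat.cast_ne_zero.2 (hn i hi).ne')
  simpa [intCast_multichoose, mul_div_assoc] using
    formula_equivalence_general b m (Finset.nonempty_Icc.2 (by omega)) (by simpa) hn₀

end
end
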